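/- arXiv:1810.09005 — 2 statements merged into one kernel-verified Lean document; each statement's English description precedes it below -/
import Mathlib

section
/- If s(f) = k for some fixed k ∈ ℕ, k ≥ 1, and n(f) ≤ 1 for every file f, then the schedule B1 = {(f,f) : n(f) = 1} consisting of one atomic mini-batch for each file with a request is optimal: v({(f,f) : n(f) = 1}) ≤ v(B1') for every schedule B1'. -/
/-!
Under any schedule the head moves left exactly `m - l` blocks net before reading a file with left
edge `l`, and every unit of rightward movement made earlier costs two extra time steps (it has to be
undone). With all sizes equal to `k`, the response time of file number `f` is therefore
`k * (N - f) + 2 * k * c f`, where `c f` (`exists_delay`) counts the files the head has moved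
right across before it begins to read `f`. Two different files begin to be read at times separated
by the complete traversal of the earlier one, so `c` is injective (`delay_injective`). Hence the
`q` requested files have pairwise distinct delays, whose sum is at least
`0 + 1 + ⋯ + (q - 1)`. The atomic schedule attains this bound: there the delay of `f` is at most the
number of requested files to its right, and these numbers are `0, …, q - 1` in some order.
-/

open Finset

namespace LTSP

variable (N : ℕ) (s : Fin N → ℕ) (n : Fin N → ℕ)

/-- Left edge (0-based coordinate) of file `f`: file `f` occupies the blocks
`leftPos f + 1, …, leftPos f + s f` of the tape. -/
def leftPos (f : Fin N) : ℕ := ∑ j ∈ Finset.Iio f, s j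

/-- Leftmost block of file `f`: `l(f) = 1 + ∑_{j<f} s j`. -/
def lB (f : Fin N) : ℕ := 1 + leftPos N s f

/-- Tape length `m = ∑ s f`. -/
def tapeLen : ℕ := ∑ j, s j

/-- Left edge `l(b)` (0-based coordinate) of a mini-batch `b = (b.1, b.2)`. -/
def Lb (b : Fin N × Fin N) : ℕ := leftPos N s b.1

/-- Right edge of a mini-batch; numerically this equals its rightmost block `r(b)`. -/
def Rb (b : Fin N × Fin N) : ℕ := leftPos N s b.2 + s b.2

/-- Size of a mini-batch: `s(b) = r(b) - l(b) + 1`. -/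
def sb (b : Fin N × Fin N) : ℕ := Rb N s b - Lb N s b

/-- `f ∈ F(b)` : file `f` is contained in the mini-batch `b`. -/
def Covers (b : Fin N × Fin N) (f : Fin N) : Prop := b.1 ≤ f ∧ f ≤ b.2

/-- `f ∈ F(B)` : file `f` is traversed by some mini-batch of the schedule `B`. -/
def InF (B : Finset (Fin N × Fin N)) (f : Fin N) : Prop := ∃ b ∈ B, Covers N b f

/-- A schedule is a finite set of mini-batches, i.e. pairs `(f, f')` with `f ≤ f'`. -/
def Valid (B : Finset (Fin N × Fin N)) : Prop := ∀ b ∈ B, b.1 ≤ b.2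

/-- `b'` is executed strictly before `b`: mini-batches are executed in decreasing order
of their leftmost blocks, ties broken by executing larger mini-batches first. -/
def ExecBefore (b' b : Fin N × Fin N) : Prop :=
  Lb N s b < Lb N s b' ∨ (Lb N s b' = Lb N s b ∧ Rb N s b < Rb N s b')

open scoped Classical in
/-- Time step at which the read movement of mini-batch `b ∈ B` begins: the head starts at
position `m` at time `0`, moves left one block per time step, and detours `2 s(b')` time
steps for every mini-batch `b'` executed before `b`. -/
noncomputable def startTime (B : Finset (Fin N × Fin N)) (b : Fin N × Fin N) : ℕ :=
  (tapeLen N s - Lb N s b) + 2 * ∑ b' ∈ B.filter (fun b' => ExecBefore N s b' b), sb N s b'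

/-- Time step at which the left-to-right traversal of file `f` within the read movement
of mini-batch `b` begins. -/
noncomputable def travTime (B : Finset (Fin N × Fin N)) (f : Fin N) (b : Fin N × Fin N) : ℕ :=
  startTime N s B b + (leftPos N s f - Lb N s b)

/-- Time step at which Phase 2 begins (the head has descended the whole tape, detouring
`2 s(b)` time steps for each executed mini-batch). -/
noncomputable def phase2Start (B : Finset (Fin N × Fin N)) : ℕ :=
  tapeLen N s + 2 * ∑ b ∈ B, sb N s b

open scoped Classical in
/-- Response time of the requests of file `f` under schedule `B`: the time step at which the
first complete left-to-right traversal of `f` begins (within the first mini-batch of `B`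
containing `f` if one exists, and during Phase 2 otherwise). -/
noncomputable def resp (B : Finset (Fin N × Fin N)) (f : Fin N) : ℕ :=
  if h : (B.filter (fun b => Covers N b f)).Nonempty then
    (B.filter (fun b => Covers N b f)).inf' h (travTime N s B f)
  else phase2Start N s B + leftPos N s f

/-- Objective value of a schedule: the sum of the response times of all requests
(file `f` contributes `n f` times its response time). -/
noncomputable def v (B : Finset (Fin N × Fin N)) : ℕ :=
  ∑ f, n f * resp N s B f

/-- A schedule is optimal if its objective value is minimum among all schedules. -/
def Optimal (B : Finset (Fin N × Fin N)) : Prop :=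
  Valid N B ∧ ∀ B' : Finset (Fin N × Fin N), Valid N B' → v N s n B ≤ v N s n B'

open scoped Classical in
/-- Left-hand side of Inequalities (1)/(2): `n(f)·(l(f) + ∑_{b ∈ B, r(b) < l(f)} s(b))`. -/
noncomputable def ineqLHS (B : Finset (Fin N × Fin N)) (f : Fin N) : ℕ :=
  n f * (lB N s f + ∑ b ∈ B.filter (fun b => Rb N s b < lB N s f), sb N s b)

open scoped Classical in
/-- Right-hand side of Inequalities (1)/(2):
`s(f)·(∑_{f', l(f') < l(f)} n(f') + ∑_{f' ∉ F(B), l(f') > l(f)} n(f'))`. -/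
noncomputable def ineqRHS (B : Finset (Fin N × Fin N)) (f : Fin N) : ℕ :=
  s f * ((∑ f' ∈ Finset.univ.filter (fun f' => lB N s f' < lB N s f), n f') +
    ∑ f' ∈ Finset.univ.filter (fun f' => ¬ InF N B f' ∧ lB N s f < lB N s f'), n f')

/-- Inequality (1). -/
def Ineq1 (B : Finset (Fin N × Fin N)) (f : Fin N) : Prop :=
  ineqRHS N s n B f < ineqLHS N s n B f

/-- Inequality (2). -/
def Ineq2 (B : Finset (Fin N × Fin N)) (f : Fin N) : Prop :=
  ineqLHS N s n B f < ineqRHS N s n B f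

/-- The Greedy Strategy schedule: one atomic mini-batch `(f, f)` for every file with at
least one request, except the leftmost file of the tape. -/
def GS (hN : 0 < N) : Finset (Fin N × Fin N) :=
  (Finset.univ.filter (fun f : Fin N => 0 < n f ∧ f ≠ ⟨0, hN⟩)).image (fun f => (f, f))

/-! ### Sums of distinct natural numbers -/

lemma sum_range_card_le_sum (t : Finset ℕ) : ∑ i ∈ Finset.range #t, i ≤ ∑ i ∈ t, i := by
  induction t using Finset.induction_on_max with
  | empty => simp
  | insert a t ht ih =>
    have hnot : a ∉ t := fun h => lt_irrefl _ (ht a h)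
    -- `a` exceeds all elements of `t`, so `t ⊆ range a` and `#t ≤ a`.
    have hcard : #t ≤ a := by
      simpa using Finset.card_le_card
        (show t ⊆ Finset.range a from fun x hx => Finset.mem_range.2 (ht x hx))
    rw [Finset.card_insert_of_notMem hnot, Finset.sum_range_succ, Finset.sum_insert hnot]
    omega

lemma sum_range_card_le_sum_of_injOn {ι : Type*} (R : Finset ι) (c : ι → ℕ)
    (hc : Set.InjOn c R) : ∑ i ∈ Finset.range #R, i ≤ ∑ f ∈ R, c f := by
  have h := sum_range_card_le_sum (R.image c)
  rwa [Finset.card_image_of_injOn hc, Finset.sum_image hc] at h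

/-- The numbers of elements of `R` above each element of `R` are `0, …, #R - 1`. -/
lemma sum_card_gt {ι : Type*} [LinearOrder ι] (R : Finset ι) :
    ∑ f ∈ R, #(R.filter (fun g => f < g)) = ∑ i ∈ Finset.range #R, i := by
  have hanti : ∀ f ∈ R, ∀ g ∈ R, f < g →
      #(R.filter (fun x => g < x)) < #(R.filter (fun x => f < x)) := by
    intro f _ g hg hfg
    apply Finset.card_lt_card
    refine (Finset.ssubset_iff_of_subset fun x hx => ?_).2 ⟨g, by simp [hg, hfg], by simp⟩
    simp only [Finset.mem_filter] at hx ⊢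
    exact ⟨hx.1, hfg.trans hx.2⟩
  have hinj : Set.InjOn (fun f => #(R.filter (fun g => f < g))) (R : Set ι) := by
    intro f hf g hg h
    rcases lt_trichotomy f g with h' | h' | h'
    · exact absurd h (hanti f hf g hg h').ne'
    · exact h'
    · exact absurd h (hanti g hg f hf h').ne
  have himg : R.image (fun f => #(R.filter (fun g => f < g))) = Finset.range #R := by
    apply Finset.eq_of_subset_of_card_le
    · intro x hx
      obtain ⟨f, hf, rfl⟩ := Finset.mem_image.1 hx
      apply Finset.mem_range.2
      apply Finset.card_lt_card
      exact (Finset.ssubset_iff_of_subset (Finset.filter_subset _ _)).2 ⟨f, hf, by simp⟩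
    · rw [Finset.card_image_of_injOn hinj, Finset.card_range]
  rw [← himg, Finset.sum_image hinj]

/-! ### Response times for files of equal size -/

/-- The number of files contained in a mini-batch `b` with `b.1 ≤ b.2`. -/
def batchLen (b : Fin N × Fin N) : ℕ := b.2 - b.1 + 1

open scoped Classical in
/-- The number of file traversals performed (with multiplicity) in the mini-batches executed
before `b`. -/
noncomputable def doneBefore (B : Finset (Fin N × Fin N)) (b : Fin N × Fin N) : ℕ :=
  ∑ b' ∈ B.filter (fun b' => ExecBefore N s b' b), batchLen N b'

section EqualSizes

variable {N s} {k : ℕ}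

lemma leftPos_eq (hs : ∀ f, s f = k) (f : Fin N) : leftPos N s f = f * k := by
  simp [leftPos, hs]

lemma tapeLen_eq (hs : ∀ f, s f = k) : tapeLen N s = N * k := by
  simp [tapeLen, hs]

lemma sb_eq (hs : ∀ f, s f = k) {b : Fin N × Fin N} (hb : b.1 ≤ b.2) :
    sb N s b = k * batchLen N b := by
  have hb' : (b.1 : ℕ) ≤ b.2 := hb
  obtain ⟨d, hd⟩ := Nat.exists_eq_add_of_le hb'
  have e : ((b.2 : ℕ) - b.1 + 1) = d + 1 := by omega
  rw [sb, Rb, Lb, leftPos_eq hs, leftPos_eq hs, hs, batchLen, e, hd]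
  apply Nat.sub_eq_of_eq_add
  ring

lemma execBefore_iff (hk : 1 ≤ k) (hs : ∀ f, s f = k) (b' b : Fin N × Fin N) :
    ExecBefore N s b' b ↔ b.1 < b'.1 ∨ (b'.1 = b.1 ∧ b.2 < b'.2) := by
  have hk' : 0 < k := hk
  simp only [ExecBefore, Lb, Rb, leftPos_eq hs, hs, add_lt_add_iff_right,
    Nat.mul_lt_mul_right hk', Nat.mul_left_inj hk'.ne', Fin.ext_iff, Fin.lt_def]

lemma travTime_eq (hs : ∀ f, s f = k) {B : Finset (Fin N × Fin N)} (hB : Valid N B)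
    {b : Fin N × Fin N} {f : Fin N} (hf : b.1 ≤ f) :
    travTime N s B f b = k * (N - f) + 2 * k * ((f - b.1) + doneBefore N s B b) := by
  classical
  have hsum : ∑ b' ∈ B.filter (fun b' => ExecBefore N s b' b), sb N s b' =
      k * doneBefore N s B b := by
    rw [doneBefore, Finset.mul_sum]
    exact Finset.sum_congr rfl fun x hx => sb_eq hs (hB x (Finset.mem_filter.1 hx).1)
  have hf' : (b.1 : ℕ) ≤ f := hf
  rw [travTime, startTime, hsum, Lb, leftPos_eq hs, leftPos_eq hs, tapeLen_eq hs,
    ← Nat.sub_mul, ← Nat.sub_mul]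
  have e : N - (b.1 : ℕ) = (N - f) + (f - b.1) := by omega
  rw [e]
  ring

/-- The response time of `f` is `k * (N - f)` plus `2 * k` times a delay `c`, the number of files
the head has moved right across before the first complete traversal of `f` begins. -/
lemma exists_delay (hs : ∀ f, s f = k) {B : Finset (Fin N × Fin N)} (hB : Valid N B)
    (f : Fin N) : ∃ c : ℕ, resp N s B f = k * (N - f) + 2 * k * c ∧
      ((∃ b ∈ B, Covers N b f ∧ c = (f - b.1) + doneBefore N s B b) ∨
        c = ∑ b ∈ B, batchLen N b + f) := by
  classical
  by_cases h : (B.filter (fun b => Covers N b f)).Nonempty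
  · obtain ⟨b, hb, hmin⟩ := Finset.exists_mem_eq_inf' h (travTime N s B f)
    obtain ⟨hbB, hcov⟩ := Finset.mem_filter.1 hb
    refine ⟨_, ?_, Or.inl ⟨b, hbB, hcov, rfl⟩⟩
    rw [resp, dif_pos h, ← travTime_eq hs hB hcov.1]
    convert hmin
  · refine ⟨_, ?_, Or.inr rfl⟩
    have hsum : ∑ b ∈ B, sb N s b = k * ∑ b ∈ B, batchLen N b := by
      rw [Finset.mul_sum]
      exact Finset.sum_congr rfl fun x hx => sb_eq hs (hB x hx)
    rw [resp, dif_neg h, phase2Start, hsum, leftPos_eq hs, tapeLen_eq hs]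
    have e : N * k = (N - f) * k + f * k := by
      rw [← Nat.add_mul, Nat.sub_add_cancel f.isLt.le]
    rw [e]
    ring

lemma batchLen_add_doneBefore_le (hk : 1 ≤ k) (hs : ∀ f, s f = k)
    {B : Finset (Fin N × Fin N)} {b' b : Fin N × Fin N} (hb' : b' ∈ B)
    (h : ExecBefore N s b' b) :
    batchLen N b' + doneBefore N s B b' ≤ doneBefore N s B b := by
  classical
  have hnot : b' ∉ B.filter (fun x => ExecBefore N s x b') := by
    simp [execBefore_iff hk hs]
  rw [doneBefore, doneBefore, ← Finset.sum_insert hnot]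
  apply Finset.sum_le_sum_of_subset
  intro x hx
  rcases Finset.mem_insert.1 hx with rfl | hx
  · exact Finset.mem_filter.2 ⟨hb', h⟩
  · obtain ⟨hxB, hx⟩ := Finset.mem_filter.1 hx
    refine Finset.mem_filter.2 ⟨hxB, ?_⟩
    rw [execBefore_iff hk hs] at h hx ⊢
    simp only [Fin.ext_iff, Fin.lt_def] at h hx ⊢
    omega

lemma batchLen_add_doneBefore_le_total (hk : 1 ≤ k) (hs : ∀ f, s f = k)
    {B : Finset (Fin N × Fin N)} {b : Fin N × Fin N} (hb : b ∈ B) :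
    batchLen N b + doneBefore N s B b ≤ ∑ x ∈ B, batchLen N x := by
  classical
  have hnot : b ∉ B.filter (fun x => ExecBefore N s x b) := by
    simp [execBefore_iff hk hs]
  rw [doneBefore, ← Finset.sum_insert hnot]
  apply Finset.sum_le_sum_of_subset
  intro x hx
  rcases Finset.mem_insert.1 hx with rfl | hx
  · exact hb
  · exact (Finset.mem_filter.1 hx).1

/-- Distinct files have distinct delays: between the starts of their reads the head moves right
across the file read earlier. -/
lemma delay_injective (hk : 1 ≤ k) (hs : ∀ f, s f = k) {B : Finset (Fin N × Fin N)}
    {c : Fin N → ℕ}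
    (hc : ∀ f, (∃ b ∈ B, Covers N b f ∧ c f = (f - b.1) + doneBefore N s B b) ∨
        c f = ∑ b ∈ B, batchLen N b + f) :
    Function.Injective c := by
  intro f g hfg
  apply Fin.ext
  rcases hc f with ⟨a, ha, ⟨ha1, ha2⟩, hcf⟩ | hcf <;>
    rcases hc g with ⟨b, hb, ⟨hb1, hb2⟩, hcg⟩ | hcg
  · rw [Fin.le_def] at ha1 ha2 hb1 hb2
    -- The execution order is total since distinct files have distinct left edges.
    have htri : a = b ∨ ExecBefore N s a b ∨ ExecBefore N s b a := by
      simp only [execBefore_iff hk hs, Prod.ext_iff, Fin.ext_iff, Fin.lt_def]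
      omega
    rcases htri with rfl | h | h
    · omega
    · have := batchLen_add_doneBefore_le hk hs ha h
      simp only [batchLen] at this
      omega
    · have := batchLen_add_doneBefore_le hk hs hb h
      simp only [batchLen] at this
      omega
  · rw [Fin.le_def] at ha1 ha2
    have := batchLen_add_doneBefore_le_total hk hs ha
    rw [batchLen] at this
    omega
  · rw [Fin.le_def] at hb1 hb2
    have := batchLen_add_doneBefore_le_total hk hs hb
    rw [batchLen] at this
    omega
  · omega

/-! ### The atomic schedule -/

lemma valid_atomic (R : Finset (Fin N)) : Valid N (R.image (fun f => (f, f))) := by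
  intro b hb
  obtain ⟨f, _, rfl⟩ := Finset.mem_image.1 hb
  exact le_rfl

lemma resp_atomic_le (hk : 1 ≤ k) (hs : ∀ f, s f = k) (R : Finset (Fin N)) {f : Fin N}
    (hf : f ∈ R) :
    resp N s (R.image (fun f => (f, f))) f ≤
      k * (N - f) + 2 * k * #(R.filter (fun g => f < g)) := by
  classical
  have hmem : (f, f) ∈ (R.image (fun f => (f, f))).filter (fun b => Covers N b f) :=
    Finset.mem_filter.2 ⟨Finset.mem_image_of_mem _ hf, le_rfl, le_rfl⟩
  have hdone : doneBefore N s (R.image (fun f => (f, f))) (f, f) =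
      #(R.filter (fun g => f < g)) := by
    have hset : (R.image (fun f => (f, f))).filter (fun b' => ExecBefore N s b' (f, f)) =
        (R.filter (fun g => f < g)).image (fun f => (f, f)) := by
      ext x
      simp only [Finset.mem_filter, Finset.mem_image, execBefore_iff hk hs]
      constructor
      · rintro ⟨⟨g, hg, rfl⟩, h⟩
        refine ⟨g, ⟨hg, ?_⟩, rfl⟩
        rcases h with h | ⟨_, h⟩ <;> exact h
      · rintro ⟨g, ⟨hg, h⟩, rfl⟩
        exact ⟨⟨g, hg, rfl⟩, Or.inl h⟩
    rw [doneBefore, hset, Finset.sum_image (fun _ _ _ _ h => congrArg Prod.fst h)]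
    simp [batchLen]
  have htrav := travTime_eq hs (valid_atomic R) (b := (f, f)) (f := f) le_rfl
  rw [hdone, Nat.sub_self, Nat.zero_add] at htrav
  rw [← htrav, resp, dif_pos ⟨_, hmem⟩]
  exact Finset.inf'_le _ hmem

end EqualSizes

/-! ### Optimality -/

/-- If all files have the same size `k ≥ 1` and at most one request each, then the schedule
consisting of one atomic mini-batch for each file with a request is optimal. -/
theorem stmt18 (k : ℕ) (hk : 1 ≤ k) (hs : ∀ f, s f = k) (hn : ∀ f, n f ≤ 1) :
    ∀ B1' : Finset (Fin N × Fin N), Valid N B1' →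
      v N s n ((Finset.univ.filter (fun f : Fin N => n f = 1)).image (fun f => (f, f))) ≤
        v N s n B1' := by
  intro B hB
  have hv : ∀ B', v N s n B' = ∑ f with n f = 1, resp N s B' f := by
    intro B'
    rw [v, Finset.sum_filter]
    refine Finset.sum_congr rfl fun f _ => ?_
    have := hn f
    split_ifs with h
    · rw [h, one_mul]
    · rw [show n f = 0 by omega, zero_mul]
  rw [hv, hv]
  set R := Finset.univ.filter (fun f : Fin N => n f = 1)
  choose c hresp hc using exists_delay hs hB
  calc ∑ f ∈ R, resp N s (R.image (fun f => (f, f))) f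
      ≤ ∑ f ∈ R, (k * (N - f) + 2 * k * #(R.filter (fun g => f < g))) :=
        Finset.sum_le_sum fun f hf => resp_atomic_le hk hs R hf
    _ = ∑ f ∈ R, k * (N - f) + 2 * k * ∑ i ∈ Finset.range #R, i := by
        rw [Finset.sum_add_distrib, ← Finset.mul_sum _ _ (2 * k), sum_card_gt]
    _ ≤ ∑ f ∈ R, k * (N - f) + 2 * k * ∑ f ∈ R, c f := by
        gcongr
        exact sum_range_card_le_sum_of_injOn R c (delay_injective hk hs hc).injOn
    _ = ∑ f ∈ R, resp N s B f := by
        rw [Finset.mul_sum, ← Finset.sum_add_distrib]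
        exact Finset.sum_congr rfl fun f _ => (hresp f).symm

end LTSP
end

section
/- Assume s(f) = k for some fixed k ∈ ℕ, k ≥ 1, and n(f) ≤ 1 for every file f. If B1 is an optimal schedule and f is a file with n(f) = 0, then every file f' with l(f') > l(f) and n(f') = 1 belongs to F(B1). -/
/-!
Suppose some requested file to the right of `f` is not covered by the optimal schedule, and let `g`
be the rightmost requested file that is not covered. Adding the atomic mini-batch `(g, g)` yields a
strictly better schedule, a contradiction:

* the request of `g` is no longer served in Phase 2 but on the way left, which saves at least
  `2 * leftPos g` time steps (`resp_insert_self`);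
* every other response time grows by at most the length `2k` of the detour (`resp_insert_le`), and
  not at all for a covered file right of `g`: it lies in a mini-batch that avoids `g`, hence starts
  right of `g` and is executed before the detour (`resp_insert_right`).

By the choice of `g`, all requested files right of `g` are covered, so only requests left of `g` are
delayed. Since `f` is left of `g` and has no request, the total delay is at most
`2 * leftPos g - 2k`, less than the saving.
-/

open Finset

namespace LTSP

variable (N : ℕ) (s : Fin N → ℕ) (n : Fin N → ℕ)

theorem leftPos_const {k : ℕ} (hs : ∀ f, s f = k) (f : Fin N) :
    leftPos N s f = f.val * k := by
  simp [leftPos, hs]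

theorem leftPos_le_tapeLen (f : Fin N) : leftPos N s f ≤ tapeLen N s :=
  Finset.sum_le_sum_of_subset (Finset.subset_univ _)

theorem sb_atomic (g : Fin N) : sb N s (g, g) = s g := by
  simp [sb, Rb, Lb]

theorem startTime_insert_le (B : Finset (Fin N × Fin N)) (c b : Fin N × Fin N) :
    startTime N s (insert c B) b ≤ startTime N s B b + 2 * sb N s c := by
  classical
  unfold startTime
  rw [Finset.filter_insert]
  split_ifs with h
  · by_cases hc : c ∈ B.filter (fun b' => ExecBefore N s b' b)
    · rw [Finset.insert_eq_of_mem hc]; omega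
    · rw [Finset.sum_insert hc]; omega
  · omega

theorem startTime_insert_of_not (B : Finset (Fin N × Fin N)) (c b : Fin N × Fin N)
    (h : ¬ ExecBefore N s c b) :
    startTime N s (insert c B) b = startTime N s B b := by
  classical
  unfold startTime
  rw [Finset.filter_insert, if_neg h]

theorem resp_le {B : Finset (Fin N × Fin N)} {h : Fin N} {b : Fin N × Fin N}
    (hb : b ∈ B) (hc : Covers N b h) : resp N s B h ≤ travTime N s B h b := by
  classical
  have hm : b ∈ B.filter (fun b => Covers N b h) := Finset.mem_filter.2 ⟨hb, hc⟩
  unfold resp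
  rw [dif_pos ⟨b, hm⟩]
  exact Finset.inf'_le _ hm

theorem resp_eq_of_inF {B : Finset (Fin N × Fin N)} {h : Fin N} (hF : InF N B h) :
    ∃ b ∈ B, Covers N b h ∧ resp N s B h = travTime N s B h b := by
  classical
  obtain ⟨b, hb, hc⟩ := hF
  have hne : (B.filter (fun b => Covers N b h)).Nonempty := ⟨b, Finset.mem_filter.2 ⟨hb, hc⟩⟩
  obtain ⟨b', hb', he⟩ := Finset.exists_mem_eq_inf' hne (travTime N s B h)
  rw [Finset.mem_filter] at hb'
  refine ⟨b', hb'.1, hb'.2, ?_⟩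
  unfold resp
  rw [dif_pos hne]
  exact he

theorem resp_eq_of_not_inF {B : Finset (Fin N × Fin N)} {h : Fin N} (hF : ¬ InF N B h) :
    resp N s B h = phase2Start N s B + leftPos N s h := by
  classical
  unfold resp
  rw [dif_neg]
  rintro ⟨b, hb⟩
  rw [Finset.mem_filter] at hb
  exact hF ⟨b, hb.1, hb.2⟩

/-- Adding a mini-batch that does not cover `h` delays the requests of `h` by at most the length of
the detour. -/
theorem resp_insert_le (B : Finset (Fin N × Fin N)) (c : Fin N × Fin N) (h : Fin N)
    (hcov : ¬ Covers N c h) :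
    resp N s (insert c B) h ≤ resp N s B h + 2 * sb N s c := by
  classical
  by_cases hF : InF N B h
  · obtain ⟨b, hb, hc, he⟩ := resp_eq_of_inF N s hF
    have h1 := resp_le N s (Finset.mem_insert_of_mem (b := c) hb) hc
    have h2 := startTime_insert_le N s B c b
    rw [he]
    unfold travTime at *
    omega
  · have hF' : ¬ InF N (insert c B) h := by
      rintro ⟨b, hb, hbc⟩
      rcases Finset.mem_insert.1 hb with rfl | hb
      · exact hcov hbc
      · exact hF ⟨b, hb, hbc⟩
    rw [resp_eq_of_not_inF N s hF, resp_eq_of_not_inF N s hF']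
    unfold phase2Start
    by_cases hc : c ∈ B
    · rw [Finset.insert_eq_of_mem hc]; omega
    · rw [Finset.sum_insert hc]; omega

/-- A covered file to the right of an uncovered file `g` is not delayed by the detour at `g`. -/
theorem resp_insert_right {k : ℕ} (hk : 1 ≤ k) (hs : ∀ f, s f = k)
    {B : Finset (Fin N × Fin N)} {g h : Fin N} (hg : ¬ InF N B g) (hgh : g < h)
    (hF : InF N B h) :
    resp N s (insert (g, g) B) h ≤ resp N s B h := by
  classical
  obtain ⟨b, hb, hc, he⟩ := resp_eq_of_inF N s hF
  have hlt : g < b.1 := by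
    by_contra hle
    exact hg ⟨b, hb, not_lt.1 hle, hgh.le.trans hc.2⟩
  have hnot : ¬ ExecBefore N s (g, g) b := by
    have h1 : (g.val + 1) * k ≤ b.1.val * k := Nat.mul_le_mul_right _ hlt
    rw [Nat.add_mul] at h1
    simp only [ExecBefore, Lb, leftPos_const N s hs]
    omega
  have h1 := resp_le N s (Finset.mem_insert_of_mem (b := (g, g)) hb) hc
  have h2 := startTime_insert_of_not N s B (g, g) b hnot
  rw [he]
  unfold travTime at *
  omega

/-- Serving an uncovered file `g` by an atomic mini-batch instead of in Phase 2 saves at least twice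
the distance of `g` from the left end of the tape. -/
theorem resp_insert_self {B : Finset (Fin N × Fin N)} {g : Fin N} (hg : ¬ InF N B g) :
    resp N s (insert (g, g) B) g + 2 * leftPos N s g ≤ resp N s B g := by
  classical
  have h1 := resp_le N s (B := insert (g, g) B) (h := g) (Finset.mem_insert_self _ _)
    (show Covers N (g, g) g from ⟨le_rfl, le_rfl⟩)
  have hnot : ¬ ExecBefore N s (g, g) (g, g) := by simp [ExecBefore]
  have h2 := startTime_insert_of_not N s B (g, g) (g, g) hnot
  have h3 : ∑ b' ∈ B.filter (fun b' => ExecBefore N s b' (g, g)), sb N s b' ≤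
      ∑ b' ∈ B, sb N s b' := Finset.sum_le_sum_of_subset (Finset.filter_subset _ _)
  have h4 := leftPos_le_tapeLen N s g
  rw [resp_eq_of_not_inF N s hg]
  have h5 : Lb N s (g, g) = leftPos N s g := rfl
  unfold travTime at h1
  rw [h2] at h1
  unfold startTime at h1
  unfold phase2Start
  omega

/-- Assume all files have the same size `k ≥ 1` and at most one request each. If `B1` is an
optimal schedule and `f` is a file with no request, then every file `f'` with
`l(f') > l(f)` and one request belongs to `F(B1)`. -/
theorem stmt19 (k : ℕ) (hk : 1 ≤ k) (hs : ∀ f, s f = k) (hn : ∀ f, n f ≤ 1)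
    (B1 : Finset (Fin N × Fin N)) (hopt : Optimal N s n B1)
    (f : Fin N) (hf : n f = 0) :
    ∀ f' : Fin N, lB N s f < lB N s f' → n f' = 1 → InF N B1 f' := by
  classical
  intro f' hff' hnf'
  by_contra hF'
  obtain ⟨g, hgS, hgmax⟩ := Finset.exists_max_image
    (Finset.univ.filter (fun h : Fin N => n h = 1 ∧ ¬ InF N B1 h)) id
    ⟨f', by simp [hnf', hF']⟩
  simp only [Finset.mem_filter, Finset.mem_univ, true_and, id] at hgS hgmax
  obtain ⟨hng, hFg⟩ := hgS
  have hfg : f < g := by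
    refine lt_of_lt_of_le ?_ (hgmax f' ⟨hnf', hF'⟩)
    by_contra hle
    have := Nat.mul_le_mul_right k (show f'.val ≤ f.val from not_lt.1 hle)
    simp only [lB, leftPos_const N s hs] at hff'
    omega
  have hvalid : Valid N (insert (g, g) B1) := by
    intro b hb
    rcases Finset.mem_insert.1 hb with rfl | hb
    · exact le_rfl
    · exact hopt.1 b hb
  -- The saving of `g` is on the left, the delays of the files in `{h < g} \ {f}` on the right.
  have hpt : ∀ h : Fin N,
      n h * resp N s (insert (g, g) B1) h + (if h = g then 2 * leftPos N s g else 0) ≤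
      n h * resp N s B1 h + (if h ∈ (Finset.Iio g).erase f then 2 * k else 0) := by
    intro h
    have hdelay : h ≠ g → resp N s (insert (g, g) B1) h ≤ resp N s B1 h + 2 * k := by
      intro hne
      have := resp_insert_le N s B1 (g, g) h (fun hc => hne (le_antisymm hc.2 hc.1))
      rwa [sb_atomic, hs] at this
    rcases Nat.le_one_iff_eq_zero_or_eq_one.1 (hn h) with h0 | h1
    · have hne : h ≠ g := by rintro rfl; omega
      simp [h0, hne]
    · rcases lt_trichotomy h g with hlt | rfl | hgt
      · have hne : h ≠ f := by rintro rfl; omega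
        have := hdelay hlt.ne
        simpa [h1, hlt.ne, hne, hlt] using this
      · have := resp_insert_self N s hFg
        simpa [h1] using this
      · have hFh : InF N B1 h := by
          by_contra hc
          exact absurd (hgmax h ⟨h1, hc⟩) (not_le.2 hgt)
        have := resp_insert_right N s hk hs hFg hgt hFh
        simpa [h1, hgt.ne', not_lt.2 hgt.le] using this
  have hsum := Finset.sum_le_sum (fun h (_ : h ∈ (Finset.univ : Finset (Fin N))) => hpt h)
  rw [Finset.sum_add_distrib, Finset.sum_add_distrib, Finset.sum_ite_mem, Finset.univ_inter,
    Finset.sum_ite_eq' Finset.univ g, if_pos (Finset.mem_univ g), Finset.sum_const,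
    Finset.card_erase_of_mem (Finset.mem_Iio.2 hfg), Fin.card_Iio, smul_eq_mul,
    leftPos_const N s hs] at hsum
  have hle := hopt.2 _ hvalid
  unfold v at hle
  obtain ⟨j, hj⟩ : ∃ j, g.val = j + 1 :=
    ⟨g.val - 1, by have : f.val < g.val := hfg; omega⟩
  rw [hj, Nat.add_sub_cancel] at hsum
  nlinarith

end LTSP
end
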